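/- (Corollary to Theorem 1) The word problem for the free Cartesian monoid is solvable: the relation =_CM on terms is decidable. -/

import Mathlib

/-- Terms of the free (quasi-)Cartesian monoid: constants `I, L, R`,
composition `comp` (written `*` in the paper) and pairing `pair`. -/
inductive Term : Type
  | I : Term
  | L : Term
  | R : Term
  | comp : Term → Term → Term
  | pair : Term → Term → Term
  deriving DecidableEq

open Term

/-- The rewrite rules (1)-(7), indexed by their number. -/
inductive Rule : ℕ → Term → Term → Prop
  | r1 (x y : Term) : Rule 1 (comp L (pair x y)) x
  | r2 (x y : Term) : Rule 2 (comp R (pair x y)) y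
  | r3 (x y z : Term) : Rule 3 (comp (pair x y) z) (pair (comp x z) (comp y z))
  | r4 (x : Term) : Rule 4 (comp I x) x
  | r5 (x : Term) : Rule 5 (comp x I) x
  | r6 (x : Term) : Rule 6 (pair (comp L x) (comp R x)) x
  | r7 : Rule 7 (pair L R) I

/-- The congruence generated by associativity of `comp`. -/
inductive AssocEq : Term → Term → Prop
  | assoc (a b c : Term) : AssocEq (comp (comp a b) c) (comp a (comp b c))
  | refl (a : Term) : AssocEq a a
  | symm {a b : Term} : AssocEq a b → AssocEq b a
  | trans {a b c : Term} : AssocEq a b → AssocEq b c → AssocEq a c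
  | comp_congr {a a' b b' : Term} :
      AssocEq a a' → AssocEq b b' → AssocEq (comp a b) (comp a' b')
  | pair_congr {a a' b b' : Term} :
      AssocEq a a' → AssocEq b b' → AssocEq (pair a b) (pair a' b')

/-- One-step rewriting by a rule whose index lies in `J`,
closed under replacement of subterms (monotone closure). -/
inductive Step (J : Set ℕ) : Term → Term → Prop
  | rule {n : ℕ} {x y : Term} : n ∈ J → Rule n x y → Step J x y
  | comp_left {a a' b : Term} : Step J a a' → Step J (comp a b) (comp a' b)
  | comp_right {a b b' : Term} : Step J b b' → Step J (comp a b) (comp a b')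
  | pair_left {a a' b : Term} : Step J a a' → Step J (pair a b) (pair a' b)
  | pair_right {a b b' : Term} : Step J b b' → Step J (pair a b) (pair a b')

/-- One-step rewriting modulo associativity. -/
def StepA (J : Set ℕ) (a b : Term) : Prop :=
  ∃ a' b', AssocEq a a' ∧ Step J a' b' ∧ AssocEq b' b

/-- Many-step rewriting `↠_J`: the monotone reflexive transitive closure of
one-step rewriting by the rules in `J`, modulo associativity. -/
def Red (J : Set ℕ) (a b : Term) : Prop :=
  ∃ c, Relation.ReflTransGen (StepA J) a c ∧ AssocEq c b

/-- `a` is in normal form w.r.t. the rules in `J` (modulo associativity). -/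
def NF (J : Set ℕ) (a : Term) : Prop := ∀ b, ¬ StepA J a b

/-- Rules (1)-(7). -/
def rules17 : Set ℕ := {n | 1 ≤ n ∧ n ≤ 7}
/-- Rules (1)-(5). -/
def rules15 : Set ℕ := {n | 1 ≤ n ∧ n ≤ 5}
/-- Rules (1)-(4). -/
def rules14 : Set ℕ := {n | 1 ≤ n ∧ n ≤ 4}
/-- Rules (5), (6), (7). -/
def rules567 : Set ℕ := {5, 6, 7}

/-- The congruence `=_CM` generated by the Cartesian monoid axioms (i)-(iv)
and the monoid axioms for `comp` with unit `I`. -/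
inductive CMEq : Term → Term → Prop
  | proj_left (f g : Term) : CMEq (comp L (pair f g)) f
  | proj_right (f g : Term) : CMEq (comp R (pair f g)) g
  | lift (f g h : Term) : CMEq (comp (pair f g) h) (pair (comp f h) (comp g h))
  | surj : CMEq (pair L R) I
  | assoc (a b c : Term) : CMEq (comp (comp a b) c) (comp a (comp b c))
  | one_mul (a : Term) : CMEq (comp I a) a
  | mul_one (a : Term) : CMEq (comp a I) a
  | refl (a : Term) : CMEq a a
  | symm {a b : Term} : CMEq a b → CMEq b a
  | trans {a b c : Term} : CMEq a b → CMEq b c → CMEq a c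
  | comp_congr {a a' b b' : Term} :
      CMEq a a' → CMEq b b' → CMEq (comp a b) (comp a' b')
  | pair_congr {a a' b b' : Term} :
      CMEq a a' → CMEq b b' → CMEq (pair a b) (pair a' b')

/-- The congruence `=_CQ` generated by the axioms (i)-(iii)
and the monoid axioms (no surjectivity `⟨L,R⟩ = I`). -/
inductive CQEq : Term → Term → Prop
  | proj_left (f g : Term) : CQEq (comp L (pair f g)) f
  | proj_right (f g : Term) : CQEq (comp R (pair f g)) g
  | lift (f g h : Term) : CQEq (comp (pair f g) h) (pair (comp f h) (comp g h))
  | assoc (a b c : Term) : CQEq (comp (comp a b) c) (comp a (comp b c))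
  | one_mul (a : Term) : CQEq (comp I a) a
  | mul_one (a : Term) : CQEq (comp a I) a
  | refl (a : Term) : CQEq a a
  | symm {a b : Term} : CQEq a b → CQEq b a
  | trans {a b c : Term} : CQEq a b → CQEq b c → CQEq a c
  | comp_congr {a a' b b' : Term} :
      CQEq a a' → CQEq b b' → CQEq (comp a b) (comp a' b')
  | pair_congr {a a' b b' : Term} :
      CQEq a a' → CQEq b b' → CQEq (pair a b) (pair a' b')

/-- An injective numerical encoding of terms, used to state computability. -/
def encodeTerm : Term → ℕ
  | I => 0
  | L => 1
  | R => 2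
  | comp a b => 2 * Nat.pair (encodeTerm a) (encodeTerm b) + 3
  | pair a b => 2 * Nat.pair (encodeTerm a) (encodeTerm b) + 4

/-- A numerical encoding of finite lists of terms. -/
def encodeTermList : List Term → ℕ
  | [] => 0
  | a :: l => Nat.pair (encodeTerm a) (encodeTermList l) + 1

/-- The product of a list of terms (with `I` as the empty product). -/
def listProd : List Term → Term
  | [] => I
  | a :: l => comp a (listProd l)

/-- `=_CQ` as a setoid. -/
def cqSetoid : Setoid Term :=
  ⟨CQEq, ⟨fun a => CQEq.refl a, fun h => h.symm, fun h₁ h₂ => h₁.trans h₂⟩⟩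

/-- The free categorical quasiproduct monoid `CQ = T / =_CQ`. -/
def CQ : Type := Quotient cqSetoid

/-- `=_CM` as a setoid. -/
def cmSetoid : Setoid Term :=
  ⟨CMEq, ⟨fun a => CMEq.refl a, fun h => h.symm, fun h₁ h₂ => h₁.trans h₂⟩⟩

/-- The free Cartesian monoid `CM = T / =_CM`. -/
def CM : Type := Quotient cmSetoid

/-- The submonoid of `CQ` generated by (the classes of) the members of `B`,
as a set of elements of `CQ`. -/
def genSubmonoidCQ (B : List Term) : Set CQ :=
  {x | ∃ l : List Term, (∀ t ∈ l, t ∈ B) ∧ Quotient.mk cqSetoid (listProd l) = x}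

/-- The submonoid of `CM` generated by (the classes of) the members of `B`,
as a set of elements of `CM`. -/
def genSubmonoidCM (B : List Term) : Set CM :=
  {x | ∃ l : List Term, (∀ t ∈ l, t ∈ B) ∧ Quotient.mk cmSetoid (listProd l) = x}

/-- A shift: a product (under `comp`) of copies of `L` and `R`,
with `I` as the empty product. -/
inductive IsShift : Term → Prop
  | unit : IsShift I
  | left : IsShift L
  | right : IsShift R
  | comp {s t : Term} : IsShift s → IsShift t → IsShift (comp s t)

/-- The CQ normal form (normal form w.r.t. rules (1)-(5)) of `X` is a shift. -/
def nfIsShift (X : Term) : Prop :=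
  ∃ N, Red rules15 X N ∧ NF rules15 N ∧ IsShift N

/-- The product `F_0 * ⋯ * F_{n-1}` of the first `n` values of a sequence. -/
def prodTake (f : ℕ → Term) (n : ℕ) : Term := listProd ((List.range n).map f)

/-- `B` covers Cantor space: there is an infinite sequence of members of `B`
such that for each shift `S` some finite initial product composed with `S`
has a CQ normal form that is not a shift. -/
def Covers (B : List Term) : Prop :=
  ∃ f : ℕ → Term, (∀ n, f n ∈ B) ∧
    ∀ S, IsShift S → ∃ n, ¬ nfIsShift (comp S (prodTake f n))

/-- The shift `S` is bad for `B`: for every finite sequence of members of `B`,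
the CQ normal form of `S*F_1*⋯*F_n` is a shift. -/
def BadFor (B : List Term) (S : Term) : Prop :=
  ∀ l : List Term, (∀ t ∈ l, t ∈ B) → nfIsShift (comp S (listProd l))

/-- The length of a shift: the number of occurrences of `L` and `R`. -/
def lenLR : Term → ℕ
  | I => 0
  | L => 1
  | R => 1
  | comp a b => lenLR a + lenLR b
  | pair a b => lenLR a + lenLR b

/-- `S` is extenuative for `B`: it is bad for `B` and the CQ normal forms of
`S*F_1*⋯*F_k` (for `F_i` in `B`) have unbounded length. -/
def Extenuative (B : List Term) (S : Term) : Prop :=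
  BadFor B S ∧ ∀ n : ℕ, ∃ l : List Term, (∀ t ∈ l, t ∈ B) ∧
    ∃ N, Red rules15 (comp S (listProd l)) N ∧ NF rules15 N ∧ n ≤ lenLR N

/-- A term represents a right invertible element of CM. -/
def RightInvCM (F : Term) : Prop := ∃ G, CMEq (comp F G) I

/-!
The free Cartesian monoid acts on the right of the Cantor space of infinite bit streams: `L` and `R`
prepend a bit, and `⟨a, b⟩` removes the first bit and lets it choose between `a` and `b`. A term
inspects only a bounded prefix of the stream, so its action is a finite table of prefix
replacements. Equal terms act equally. Conversely, the axiom `⟨L, R⟩ = I` makes every `a` equal to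
`⟨L * a, R * a⟩`, so `a` is determined by the products `S * a` with `S` ranging over the shifts of
one fixed length `n`; once `n` is large enough, each `S * a` is itself equal to a shift, which
the table of `a` displays. Comparing two terms thus means comparing two finite tables.
-/

namespace Term

/-- The right action of terms on Cantor space; the bits `false` and `true` stand for `L` and `R`. -/
def cantorAct : Term → Stream' Bool → Stream' Bool
  | I, s => s
  | L, s => s.cons false
  | R, s => s.cons true
  | comp a b, s => cantorAct b (cantorAct a s)
  | pair a b, s => bif s.head then cantorAct b s.tail else cantorAct a s.tail

/-- The action of a term on a finite word, regarded as a prefix of a point of Cantor space. It is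
meaningful only on words at least as long as the `depth` of the term; the missing first bit of the
empty word is read as `false`. -/
def act : Term → List Bool → List Bool
  | I, w => w
  | L, w => false :: w
  | R, w => true :: w
  | comp a b, w => act b (act a w)
  | pair a b, w => bif w.headI then act b w.tail else act a w.tail

/-- A bound on the number of bits of its argument that the action of a term inspects. -/
def depth : Term → ℕ
  | I => 0
  | L => 0
  | R => 0
  | comp a b => depth a + depth b
  | pair a b => max (depth a) (depth b) + 1

/-- The shift that a word denotes. The bit next to be read is the rightmost factor, the one that
meets the term multiplied on the right. -/
def shiftOfWord : List Bool → Term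
  | [] => I
  | c :: w => comp (shiftOfWord w) (bif c then R else L)

theorem length_le_length_act_add_depth (t : Term) {w : List Bool} (hw : depth t ≤ w.length) :
    w.length ≤ (act t w).length + depth t := by
  induction t generalizing w with
  | I | L | R => simp only [act, depth, List.length_cons]; omega
  | comp a b iha ihb =>
    simp only [depth, act] at hw ⊢
    have ha := iha (w := w) (by omega)
    have hb := ihb (w := act a w) (by omega)
    omega
  | pair a b iha ihb =>
    rcases w with _ | ⟨c, w⟩
    · simp [depth] at hw
    · simp only [depth, List.length_cons] at hw ⊢
      have ha := iha (w := w) (by omega)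
      have hb := ihb (w := w) (by omega)
      cases c <;> simp only [act, List.headI_cons, List.tail_cons, cond_true, cond_false] <;> omega

theorem depth_le_length_act {a b : Term} {w : List Bool} (hw : depth (comp a b) ≤ w.length) :
    depth b ≤ (act a w).length := by
  simp only [depth] at hw
  have := length_le_length_act_add_depth a (w := w) (by omega)
  omega

theorem cantorAct_append (t : Term) {w : List Bool} (hw : depth t ≤ w.length) (s : Stream' Bool) :
    cantorAct t (w ++ₛ s) = act t w ++ₛ s := by
  induction t generalizing w with
  | I | L | R => rfl
  | comp a b iha ihb =>
    have hb := depth_le_length_act hw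
    simp only [depth] at hw
    rw [cantorAct, act, iha (by omega), ihb hb]
  | pair a b iha ihb =>
    rcases w with _ | ⟨c, w⟩
    · simp [depth] at hw
    · simp only [depth, List.length_cons] at hw
      cases c
      · exact iha (by omega)
      · exact ihb (by omega)

theorem cmEq_shiftOfWord_act (t : Term) {w : List Bool} (hw : depth t ≤ w.length) :
    CMEq (comp (shiftOfWord w) t) (shiftOfWord (act t w)) := by
  induction t generalizing w with
  | I => exact .mul_one _
  | L | R => exact .refl _
  | comp a b iha ihb =>
    have hb := depth_le_length_act hw
    simp only [depth] at hw
    exact (CMEq.assoc _ _ _).symm.trans <|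
      (CMEq.comp_congr (iha (by omega)) (.refl b)).trans (ihb hb)
  | pair a b iha ihb =>
    rcases w with _ | ⟨c, w⟩
    · simp [depth] at hw
    · simp only [depth, List.length_cons] at hw
      refine (CMEq.assoc _ _ _).trans ?_
      cases c
      · exact (CMEq.comp_congr (.refl _) (.proj_left a b)).trans (iha (by omega))
      · exact (CMEq.comp_congr (.refl _) (.proj_right a b)).trans (ihb (by omega))

end Term

theorem eq_of_forall_append_stream_eq {α : Type*} [Nontrivial α] {u v : List α}
    (h : ∀ s : Stream' α, u ++ₛ s = v ++ₛ s) : u = v := by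
  induction u generalizing v with
  | nil =>
    rcases v with _ | ⟨d, v⟩
    · rfl
    · obtain ⟨e, hne⟩ := exists_ne d
      exact absurd (congrArg Stream'.head (h (Stream'.const e))) hne
  | cons c u ih =>
    have hhead (s : Stream' α) : c = (v ++ₛ s).head := congrArg Stream'.head (h s)
    rcases v with _ | ⟨d, v⟩
    · obtain ⟨e, hne⟩ := exists_ne c
      exact absurd (hhead (Stream'.const e)).symm hne
    · have hcd : c = d := hhead (Stream'.const c)
      rw [hcd, ih fun s => congrArg Stream'.tail (h s)]

namespace CMEq

theorem cantorAct_eq {a b : Term} (h : CMEq a b) : cantorAct a = cantorAct b := by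
  induction h with
  | proj_left | proj_right | assoc | one_mul | mul_one | refl => rfl
  | lift f g h =>
    funext s
    simp only [cantorAct]
    cases s.head <;> rfl
  | surj =>
    funext s
    rw [← Stream'.eta s]
    cases s.head <;> rfl
  | symm _ ih => exact ih.symm
  | trans _ _ ih₁ ih₂ => exact ih₁.trans ih₂
  | comp_congr _ _ ih₁ ih₂ => funext s; simp only [cantorAct, ih₁, ih₂]
  | pair_congr _ _ ih₁ ih₂ => funext s; simp only [cantorAct, ih₁, ih₂]

theorem act_eq {a b : Term} (h : CMEq a b) {w : List Bool} (ha : depth a ≤ w.length)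
    (hb : depth b ≤ w.length) : act a w = act b w :=
  eq_of_forall_append_stream_eq fun s => by
    rw [← cantorAct_append a ha, ← cantorAct_append b hb, h.cantorAct_eq]

theorem pair_comp_left_right (a : Term) : CMEq (pair (comp L a) (comp R a)) a :=
  (CMEq.lift L R a).symm.trans ((CMEq.comp_congr .surj (.refl a)).trans (.one_mul a))

theorem of_forall_shiftOfWord_comp {a b : Term} (n : ℕ)
    (h : ∀ w : List Bool, w.length = n →
      CMEq (comp (shiftOfWord w) a) (comp (shiftOfWord w) b)) :
    CMEq a b := by
  induction n generalizing a b with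
  | zero => exact (CMEq.one_mul a).symm.trans ((h [] rfl).trans (.one_mul b))
  | succ n ih =>
    have hbit (c : Bool) : CMEq (comp (bif c then R else L) a) (comp (bif c then R else L) b) :=
      ih fun w hw => (CMEq.assoc _ _ _).symm.trans <|
        (h (c :: w) (by simp [hw])).trans (.assoc _ _ _)
    exact (pair_comp_left_right a).symm.trans
      ((CMEq.pair_congr (hbit false) (hbit true)).trans (pair_comp_left_right b))

end CMEq

theorem cmEq_iff_forall_act_eq {a b : Term} {n : ℕ} (ha : depth a ≤ n) (hb : depth b ≤ n) :
    CMEq a b ↔ ∀ w : List Bool, w.length = n → act a w = act b w := by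
  refine ⟨fun h w hw => h.act_eq (ha.trans_eq hw.symm) (hb.trans_eq hw.symm), fun h => ?_⟩
  refine CMEq.of_forall_shiftOfWord_comp n fun w hw => ?_
  refine (cmEq_shiftOfWord_act a (ha.trans_eq hw.symm)).trans ?_
  rw [h w hw]
  exact (cmEq_shiftOfWord_act b (hb.trans_eq hw.symm)).symm

theorem depth_le_encodeTerm (t : Term) : depth t ≤ encodeTerm t := by
  induction t with
  | I | L | R => simp [depth]
  | comp a b iha ihb | pair a b iha ihb =>
    simp only [depth, encodeTerm]
    have := Nat.add_le_pair (encodeTerm a) (encodeTerm b)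
    omega

/-- The first step in the action of the term with code `c` on the word `w`: the codes of the terms
that remain to act, in that order, and the word on which they act. Since `(2 * p + 3 - 3) / 2` and
`(2 * p + 4 - 3) / 2` are both `p`, one formula decodes compositions (odd codes) and pairings. -/
def unfoldCode (c : ℕ) (w : List Bool) : List ℕ × List Bool :=
  let p := ((c - 3) / 2).unpair
  if c = 0 then ([], w)
  else if c = 1 then ([], false :: w)
  else if c = 2 then ([], true :: w)
  else if c % 2 = 1 then ([p.1, p.2], w)
  else ([bif w.headI then p.2 else p.1], w.tail)

/-- One step of a stack machine whose state consists of the codes of the terms still to act and of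
the current word. -/
def machineStep : List ℕ × List Bool → List ℕ × List Bool
  | ([], w) => ([], w)
  | (c :: cs, w) => ((unfoldCode c w).1 ++ cs, (unfoldCode c w).2)

/-- The action of the term with code `c`, computed by `c + 1` steps of the stack machine. -/
def actCode (c : ℕ) (w : List Bool) : List Bool := (machineStep^[c + 1] ([c], w)).2

theorem unfoldCode_comp (a b : Term) (w : List Bool) :
    unfoldCode (encodeTerm (comp a b)) w = ([encodeTerm a, encodeTerm b], w) := by
  have hodd : (2 * Nat.pair (encodeTerm a) (encodeTerm b) + 3) % 2 = 1 := by omega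
  simp [unfoldCode, encodeTerm, hodd]

theorem unfoldCode_pair (a b : Term) (w : List Bool) :
    unfoldCode (encodeTerm (pair a b)) w =
      ([bif w.headI then encodeTerm b else encodeTerm a], w.tail) := by
  have heven : (2 * Nat.pair (encodeTerm a) (encodeTerm b) + 4) % 2 = 0 := by omega
  have hdiv : (2 * Nat.pair (encodeTerm a) (encodeTerm b) + 1) / 2 =
      Nat.pair (encodeTerm a) (encodeTerm b) := by omega
  simp [unfoldCode, encodeTerm, heven, hdiv]

theorem exists_iterate_machineStep_eq (t : Term) (cs : List ℕ) (w : List Bool) :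
    ∃ n ≤ encodeTerm t + 1, machineStep^[n] (encodeTerm t :: cs, w) = (cs, act t w) := by
  induction t generalizing cs w with
  | I | L | R => exact ⟨1, by simp, rfl⟩
  | comp a b iha ihb =>
    obtain ⟨m, hm, ha⟩ := iha (encodeTerm b :: cs) w
    obtain ⟨n, hn, hb⟩ := ihb cs (act a w)
    have hcode := Nat.add_le_pair (encodeTerm a) (encodeTerm b)
    refine ⟨n + m + 1, by simp only [encodeTerm]; omega, ?_⟩
    rw [Function.iterate_succ_apply, machineStep, unfoldCode_comp, Function.iterate_add_apply]
    exact (congrArg _ ha).trans hb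
  | pair a b iha ihb =>
    have hcode := Nat.add_le_pair (encodeTerm a) (encodeTerm b)
    obtain ⟨m, hm, ha⟩ := iha cs w.tail
    obtain ⟨n, hn, hb⟩ := ihb cs w.tail
    have hstep : machineStep (encodeTerm (pair a b) :: cs, w) =
        ((bif w.headI then encodeTerm b else encodeTerm a) :: cs, w.tail) := by
      rw [machineStep, unfoldCode_pair]; rfl
    cases hbit : w.headI
    · refine ⟨m + 1, by simp only [encodeTerm]; omega, ?_⟩
      rw [Function.iterate_succ_apply, hstep, act, hbit]
      exact ha
    · refine ⟨n + 1, by simp only [encodeTerm]; omega, ?_⟩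
      rw [Function.iterate_succ_apply, hstep, act, hbit]
      exact hb

theorem actCode_encodeTerm (t : Term) (w : List Bool) : actCode (encodeTerm t) w = act t w := by
  obtain ⟨n, hn, hrun⟩ := exists_iterate_machineStep_eq t [] w
  obtain ⟨k, hk⟩ := Nat.exists_eq_add_of_le' hn
  have hhalt : Function.IsFixedPt machineStep ([], act t w) := rfl
  rw [actCode, hk, Function.iterate_add_apply, hrun, hhalt.iterate k]

/-- The list of all words of length `n`. -/
def bitWords : ℕ → List (List Bool)
  | 0 => [[]]
  | n + 1 => (bitWords n).flatMap fun w => [false :: w, true :: w]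

theorem mem_bitWords {n : ℕ} {w : List Bool} : w ∈ bitWords n ↔ w.length = n := by
  induction n generalizing w with
  | zero => simp [bitWords]
  | succ n ih => rcases w with _ | ⟨_ | _, w⟩ <;> simp [bitWords, ih]

/-- The terms with codes `m` and `n` act equally on all words of length `m + n`, which is
at least the depth of each. -/
def CodesActEqually (m n : ℕ) : Prop := ∀ w ∈ bitWords (m + n), actCode m w = actCode n w

theorem codesActEqually_encodeTerm_iff (a b : Term) :
    CodesActEqually (encodeTerm a) (encodeTerm b) ↔ CMEq a b := by
  have ha : depth a ≤ encodeTerm a + encodeTerm b := le_add_right (depth_le_encodeTerm a)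
  have hb : depth b ≤ encodeTerm a + encodeTerm b := le_add_left (depth_le_encodeTerm b)
  simp only [CodesActEqually, mem_bitWords, actCode_encodeTerm, cmEq_iff_forall_act_eq ha hb]

section Primrec

open Primrec

theorem primrec_unfoldCode : Primrec₂ unfoldCode := by
  have hp : Primrec fun x : ℕ × List Bool => ((x.1 - 3) / 2).unpair :=
    Primrec.unpair.comp (nat_div.comp (nat_sub.comp .fst (.const 3)) (.const 2))
  have hcode (k : ℕ) : PrimrecPred fun x : ℕ × List Bool => x.1 = k :=
    Primrec.eq.comp .fst (.const k)
  have hodd : PrimrecPred fun x : ℕ × List Bool => x.1 % 2 = 1 :=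
    Primrec.eq.comp (nat_mod.comp .fst (.const 2)) (.const 1)
  have hpush (b : Bool) : Primrec fun x : ℕ × List Bool => (([] : List ℕ), b :: x.2) :=
    Primrec.pair (.const []) (list_cons.comp (.const b) .snd)
  have hcomp : Primrec fun x : ℕ × List Bool =>
      ([((x.1 - 3) / 2).unpair.1, ((x.1 - 3) / 2).unpair.2], x.2) :=
    Primrec.pair
      (list_cons.comp (Primrec.fst.comp hp) (list_cons.comp (Primrec.snd.comp hp) (.const []))) .snd
  have hpair : Primrec fun x : ℕ × List Bool =>
      ([bif x.2.headI then ((x.1 - 3) / 2).unpair.2 else ((x.1 - 3) / 2).unpair.1], x.2.tail) :=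
    Primrec.pair
      (list_cons.comp (Primrec.cond (list_headI.comp .snd) (Primrec.snd.comp hp)
        (Primrec.fst.comp hp)) (.const []))
      (list_tail.comp .snd)
  exact Primrec.ite (hcode 0) (Primrec.pair (.const []) .snd) <|
    Primrec.ite (hcode 1) (hpush false) <|
    Primrec.ite (hcode 2) (hpush true) <|
    Primrec.ite hodd hcomp hpair

theorem primrec_machineStep : Primrec machineStep := by
  have hunfold : Primrec fun x : (List ℕ × List Bool) × ℕ × List ℕ => unfoldCode x.2.1 x.1.2 :=
    primrec_unfoldCode.comp (Primrec.fst.comp .snd) (Primrec.snd.comp .fst)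
  have hcons : Primrec₂ fun (x : List ℕ × List Bool) (y : ℕ × List ℕ) =>
      ((unfoldCode y.1 x.2).1 ++ y.2, (unfoldCode y.1 x.2).2) :=
    Primrec.pair (list_append.comp (Primrec.fst.comp hunfold) (Primrec.snd.comp .snd))
      (Primrec.snd.comp hunfold)
  refine (list_casesOn .fst (Primrec.pair (.const []) .snd) hcons).of_eq ?_
  rintro ⟨_ | ⟨c, cs⟩, w⟩ <;> rfl

theorem primrec_actCode : Primrec₂ actCode := by
  have hinit : Primrec fun x : ℕ × List Bool => ([x.1], x.2) :=
    Primrec.pair (list_cons.comp .fst (.const [])) .snd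
  exact Primrec.snd.comp
    (nat_iterate (Primrec.succ.comp .fst) hinit (primrec_machineStep.comp₂ .right))

theorem primrec_bitWords : Primrec bitWords := by
  have hextend : Primrec₂ fun (_ : ℕ × List (List Bool)) (w : List Bool) =>
      [false :: w, true :: w] :=
    list_cons.comp (list_cons.comp (.const false) .snd)
      (list_cons.comp (list_cons.comp (.const true) .snd) (.const []))
  refine (nat_rec₁ [[]] (list_flatMap .snd hextend).to₂).of_eq fun n => ?_
  induction n with
  | zero => rfl
  | succ n ih => rw [bitWords, ← ih]

theorem primrecRel_codesActEqually : PrimrecRel CodesActEqually := by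
  have hagree : PrimrecRel fun (w : List Bool) (c : ℕ × ℕ) => actCode c.1 w = actCode c.2 w :=
    Primrec.eq.comp (primrec_actCode.comp (Primrec.fst.comp .snd) .fst)
      (primrec_actCode.comp (Primrec.snd.comp .snd) .fst)
  exact hagree.forall_mem_list.comp (primrec_bitWords.comp (nat_add.comp .fst .snd)) .id

end Primrec

theorem word_problem_CM_decidable_general :
    ∃ f : ℕ → Bool, Primrec f ∧
      ∀ a b : Term, f (Nat.pair (encodeTerm a) (encodeTerm b)) = true ↔ CMEq a b := by
  classical
  have hprim : PrimrecPred fun k : ℕ => CodesActEqually k.unpair.1 k.unpair.2 :=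
    primrecRel_codesActEqually.comp (Primrec.fst.comp .unpair) (Primrec.snd.comp .unpair)
  refine ⟨fun k => decide (CodesActEqually k.unpair.1 k.unpair.2), hprim.decide, fun a b => ?_⟩
  simp only [decide_eq_true_eq, Nat.unpair_pair, codesActEqually_encodeTerm_iff]

/-- Corollary to Theorem 1: the word problem for the free Cartesian monoid is
solvable, i.e. the relation `=_CM` is decidable. -/
theorem word_problem_CM_decidable :
    ∃ f : ℕ → Bool, Computable f ∧
      ∀ a b : Term, f (Nat.pair (encodeTerm a) (encodeTerm b)) = true ↔ CMEq a b := by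
  obtain ⟨f, hf, hiff⟩ := word_problem_CM_decidable_general
  exact ⟨f, hf.to_comp, hiff⟩
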